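/- Let π be a linear order of 𝒥 minimizing the single-crew cost ∑_J ω_J·E_J(C^π) over all linear orders of 𝒥, and let (a, S) be a feasible schedule of 𝒥 on m identical machines satisfying m·S_j ≤ ∑_{i : i ≺_π j} p_i for every job j, with completion times C_j = S_j + p_j. Then ∑_J ω_J·E_J(C) ≤ (2 − 1/m)·∑_J ω_J·E_J(C') for every feasible schedule of 𝒥 on m identical machines with completion times C'. (The single-to-multi-crew conversion algorithm is a (2 − 1/m)-approximation.) -/

import Mathlib

/-!
List scheduling gives `C_j = S_j + p_j ≤ (1/m) C^π_j + (1 - 1/m) p_j`, so after taking maxima over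
the islands below `K` it suffices to compare the two terms with the energization times `E_K(C')` of
an arbitrary feasible schedule.

* `p_j ≤ C'_j`, hence the second term contributes at most `(1 - 1/m) E_K(C')`.
* Ordering the jobs by `C'` (ties broken by `π`) gives a single-crew order `r'`. All jobs that
  precede `j` in `r'` are finished by time `C'_j`, and each machine can process at most `C'_j` units
  of work by then (`load_le`), so `C^{r'}_j ≤ m C'_j` (`Cpi_byCompletion_le`). Optimality of `π`
  therefore bounds `(1/m) ∑ ω_K E_K(C^π)` by `∑ ω_K E_K(C')`.

Adding up gives the factor `1 + (1 - 1/m)`.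
-/

/-- Energization time of island `K` for completion times `C`. -/
noncomputable def energ {Jb I : Type*} [PartialOrder I]
    (isl : Jb → I) (C : Jb → ℝ) (K : I) : ℝ :=
  ⨆ j : {j : Jb // isl j ≤ K}, C j.1

/-- A feasible schedule of the jobs on `m` identical machines. -/
def FeasSched {Jb : Type*} (m : ℕ) (p : Jb → ℝ) (a : Jb → Fin m) (S : Jb → ℝ) : Prop :=
  (∀ j, 0 ≤ S j) ∧
  ∀ i j, i ≠ j → a i = a j → S i + p i ≤ S j ∨ S j + p j ≤ S i

open scoped Classical in
/-- Single-crew completion time of job `j` under the linear (list) order `r`. -/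
noncomputable def Cpi {Jb : Type*} [Fintype Jb] (p : Jb → ℝ)
    (r : Jb → Jb → Prop) (j : Jb) : ℝ :=
  ∑ i ∈ Finset.univ.filter (fun i => r i j), p i

theorem le_energ {Jb I : Type*} [Finite Jb] [PartialOrder I] (isl : Jb → I) (C : Jb → ℝ) (K : I)
    (j : Jb) (hj : isl j ≤ K) : C j ≤ energ isl C K :=
  le_ciSup (f := fun j : {j : Jb // isl j ≤ K} => C j.1) (Set.finite_range _).bddAbove ⟨j, hj⟩

theorem energ_le {Jb I : Type*} [PartialOrder I] (isl : Jb → I) (hsurj : Function.Surjective isl)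
    (C : Jb → ℝ) (K : I) (b : ℝ) (h : ∀ j, isl j ≤ K → C j ≤ b) : energ isl C K ≤ b := by
  obtain ⟨j, hj⟩ := hsurj K
  have : Nonempty {j : Jb // isl j ≤ K} := ⟨⟨j, hj.le⟩⟩
  exact ciSup_le fun j => h j.1 j.2

/-- Pairwise non-overlapping jobs, all finished by time `t`, have total length at most `t`. -/
theorem load_le {Jb : Type*} (p S : Jb → ℝ) (hp : ∀ j, 0 ≤ p j) (hS : ∀ j, 0 ≤ S j)
    (T : Finset Jb) : ∀ t : ℝ, 0 ≤ t → (∀ i ∈ T, S i + p i ≤ t) →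
      (∀ i ∈ T, ∀ j ∈ T, i ≠ j → S i + p i ≤ S j ∨ S j + p j ≤ S i) → ∑ i ∈ T, p i ≤ t := by
  classical
  induction T using Finset.induction_on_max_value S with
  | empty => intro t ht _ _; simpa using ht
  | insert j T hj hmax ih =>
    intro t ht hC hdis
    rw [Finset.sum_insert hj]
    have hdis' : ∀ i ∈ T, ∀ k ∈ T, i ≠ k → S i + p i ≤ S k ∨ S k + p k ≤ S i :=
      fun i hi k hk => hdis i (Finset.mem_insert_of_mem hi) k (Finset.mem_insert_of_mem hk)
    have hCj := hC j (Finset.mem_insert_self _ _)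
    -- A job of length zero may share its start time with another job, so it is split off;
    -- a latest-starting job of positive length starts after all others are finished.
    rcases (hp j).eq_or_lt with h0 | h0
    · rw [← h0, zero_add]
      exact ih t ht (fun i hi => hC i (Finset.mem_insert_of_mem hi)) hdis'
    · have h1 : ∑ i ∈ T, p i ≤ S j := by
        refine ih (S j) (hS j) (fun i hi => ?_) hdis'
        rcases hdis i (Finset.mem_insert_of_mem hi) j (Finset.mem_insert_self _ _)
          (fun h => hj (h ▸ hi)) with h | h
        · exact h
        · linarith [hmax i hi]
      linarith

/-- The order of the jobs by the value of `C`, with ties broken by `r`. -/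
def byCompletion {Jb : Type*} (C : Jb → ℝ) (r : Jb → Jb → Prop) (i j : Jb) : Prop :=
  C i < C j ∨ (C i = C j ∧ r i j)

theorem isLinearOrder_byCompletion {Jb : Type*} (C : Jb → ℝ) (r : Jb → Jb → Prop)
    (hr : IsLinearOrder Jb r) : IsLinearOrder Jb (byCompletion C r) where
  refl i := Or.inr ⟨rfl, hr.refl i⟩
  trans i j k := by
    rintro (h | ⟨h, h'⟩) (g | ⟨g, g'⟩)
    · exact Or.inl (h.trans g)
    · exact Or.inl (g ▸ h)
    · exact Or.inl (h ▸ g)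
    · exact Or.inr ⟨h.trans g, hr.trans _ _ _ h' g'⟩
  antisymm i j := by
    rintro (h | ⟨h, h'⟩) (g | ⟨g, g'⟩)
    · exact absurd (h.trans g) (lt_irrefl _)
    · exact absurd h (by simp [g])
    · exact absurd g (by simp [h])
    · exact hr.antisymm _ _ h' g'
  total i j := by
    rcases lt_trichotomy (C i) (C j) with h | h | h
    · exact Or.inl (Or.inl h)
    · exact (hr.total i j).imp (fun g => Or.inr ⟨h, g⟩) (fun g => Or.inr ⟨h.symm, g⟩)
    · exact Or.inr (Or.inl h)

/-- The single-crew schedule that follows the completion order of a feasible `m`-machine schedule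
delays every job by a factor of at most `m`. -/
theorem Cpi_byCompletion_le {Jb : Type*} [Fintype Jb] (m : ℕ) (p : Jb → ℝ) (hp : ∀ j, 0 ≤ p j)
    (r : Jb → Jb → Prop) (a : Jb → Fin m) (S : Jb → ℝ) (hfeas : FeasSched m p a S) (j : Jb) :
    Cpi p (byCompletion (fun j => S j + p j) r) j ≤ m * (S j + p j) := by
  classical
  obtain ⟨hS, hdis⟩ := hfeas
  unfold Cpi
  rw [← Finset.sum_fiberwise (g := a)]
  calc _ ≤ ∑ _k : Fin m, (S j + p j) := by
        refine Finset.sum_le_sum fun k _ => load_le p S hp hS _ _ (add_nonneg (hS j) (hp j)) ?_ ?_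
        · intro i hi
          simp only [Finset.mem_filter, Finset.mem_univ, true_and] at hi
          exact hi.1.elim le_of_lt fun h => h.1.le
        · intro i hi l hl hil
          simp only [Finset.mem_filter] at hi hl
          exact hdis i l hil (hi.2.trans hl.2.symm)
    _ = m * (S j + p j) := by simp [mul_add]

open scoped Classical in
/-- The single-to-multi-crew conversion algorithm is a
`(2 − 1/m)`-approximation: if the linear order `π` minimizes the single-crew
cost over all linear orders of the jobs, and `(a, S)` is a feasible `m`-machine
schedule satisfying the list bound `m·S_j ≤ ∑_{i ≺_π j} p_i`, then the weighted
total energization time of the resulting completion times `C_j = S_j + p_j` is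
at most `(2 − 1/m)` times that of any feasible `m`-machine schedule. -/
theorem conversion_two_minus_one_over_m_approx {Jb I : Type*} [Fintype Jb]
    [Fintype I] [Nonempty I] [PartialOrder I]
    (m : ℕ) (hm : 1 ≤ m)
    (isl : Jb → I) (hsurj : Function.Surjective isl)
    (p : Jb → ℝ) (hp : ∀ j, 0 ≤ p j)
    (ω : I → ℝ) (hω : ∀ K, 0 ≤ ω K)
    (r : Jb → Jb → Prop) (hr : IsLinearOrder Jb r)
    (hropt : ∀ r' : Jb → Jb → Prop, IsLinearOrder Jb r' →
      ∑ K, ω K * energ isl (Cpi p r) K ≤ ∑ K, ω K * energ isl (Cpi p r') K)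
    (a : Jb → Fin m) (S : Jb → ℝ) (hfeas : FeasSched m p a S)
    (hlist : ∀ j, (m : ℝ) * S j
      ≤ ∑ i ∈ Finset.univ.filter (fun i => r i j ∧ i ≠ j), p i) :
    ∀ (a' : Jb → Fin m) (S' : Jb → ℝ), FeasSched m p a' S' →
      ∑ K, ω K * energ isl (fun j => S j + p j) K
        ≤ (2 - 1 / (m : ℝ)) * ∑ K, ω K * energ isl (fun j => S' j + p j) K := by
  intro a' S' hfeas'
  have hm0 : (0 : ℝ) < m := by exact_mod_cast hm
  have hm1 : 0 ≤ 1 - 1 / (m : ℝ) := by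
    rw [sub_nonneg, div_le_one hm0]; exact_mod_cast hm
  set C' : Jb → ℝ := fun j => S' j + p j with hC'
  have hC (j : Jb) : S j + p j ≤ 1 / (m : ℝ) * Cpi p r j + (1 - 1 / (m : ℝ)) * p j := by
    have hsplit : Cpi p r j
        = ∑ i ∈ Finset.univ.filter (fun i => r i j ∧ i ≠ j), p i + p j := by
      have hset : Finset.univ.filter (fun i => r i j)
          = insert j (Finset.univ.filter (fun i => r i j ∧ i ≠ j)) := by
        ext i
        simp only [Finset.mem_filter, Finset.mem_univ, true_and, Finset.mem_insert]
        have := hr.refl j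
        by_cases h : i = j
        · subst h; simpa using this
        · simp [h]
      rw [Cpi, hset, Finset.sum_insert (by simp), add_comm]
    have h1 : S j ≤ 1 / (m : ℝ) * (Cpi p r j - p j) := by
      rw [one_div, inv_mul_eq_div, le_div_iff₀ hm0, mul_comm]
      linarith [hlist j]
    linarith
  have hE (K : I) : energ isl (fun j => S j + p j) K
      ≤ 1 / (m : ℝ) * energ isl (Cpi p r) K + (1 - 1 / (m : ℝ)) * energ isl C' K := by
    refine energ_le isl hsurj _ K _ fun j hj => (hC j).trans ?_
    have h1 := le_energ isl (Cpi p r) K j hj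
    have h2 : p j ≤ energ isl C' K :=
      le_trans (le_add_of_nonneg_left (hfeas'.1 j)) (le_energ isl C' K j hj)
    gcongr
  have hE' (K : I) : energ isl (Cpi p (byCompletion C' r)) K ≤ m * energ isl C' K := by
    refine energ_le isl hsurj _ K _ fun j hj =>
      (Cpi_byCompletion_le m p hp r a' S' hfeas' j).trans ?_
    have := le_energ isl C' K j hj
    gcongr
  have hopt : ∑ K, ω K * energ isl (Cpi p r) K ≤ m * ∑ K, ω K * energ isl C' K := by
    refine (hropt _ (isLinearOrder_byCompletion C' r hr)).trans ?_
    rw [Finset.mul_sum]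
    refine Finset.sum_le_sum fun K _ => ?_
    linarith [mul_le_mul_of_nonneg_left (hE' K) (hω K)]
  calc ∑ K, ω K * energ isl (fun j => S j + p j) K
      ≤ ∑ K, (1 / (m : ℝ) * (ω K * energ isl (Cpi p r) K)
          + (1 - 1 / (m : ℝ)) * (ω K * energ isl C' K)) := by
        refine Finset.sum_le_sum fun K _ => ?_
        linarith [mul_le_mul_of_nonneg_left (hE K) (hω K)]
    _ = 1 / (m : ℝ) * ∑ K, ω K * energ isl (Cpi p r) K
          + (1 - 1 / (m : ℝ)) * ∑ K, ω K * energ isl C' K := by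
        rw [Finset.sum_add_distrib, Finset.mul_sum, Finset.mul_sum]
    _ ≤ 1 / (m : ℝ) * (m * ∑ K, ω K * energ isl C' K)
          + (1 - 1 / (m : ℝ)) * ∑ K, ω K * energ isl C' K := by gcongr
    _ = (2 - 1 / (m : ℝ)) * ∑ K, ω K * energ isl C' K := by
        field_simp; ring
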